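/- arXiv:math/0406091 — 2 statements merged into one kernel-verified Lean document; each statement's English description precedes it below -/
import Mathlib

section
/- The infinite product 2·∏_{p prime, p > 2} (1 − 1/(p−1)²) over all odd primes p converges to a positive real number (the twin prime constant C₂), and 1.3203 < C₂ < 1.3204. -/
/-!
The Euler product `∏_p (1 - p⁻²)⁻¹ = ζ(2) = π² / 6` gives `∏_{p > 2} (1 - p⁻²)⁻¹ = π² / 8`.
Multiplying the twin prime product `A = ∏_{p > 2} (1 - (p - 1)⁻²)` by it yields

  `A * π² / 8 = ∏_{p > 2} (1 - t p)`, where `t p = (2p - 1) / ((p - 1)³ (p + 1))`.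

Since `t p ~ 2 / p³`, this product converges much faster than the original one: the factors with
`p < 250` determine it up to a relative error `1 / (249 * 248)`. Indeed `∏ (1 - t p) ≥ 1 - ∑ t p`,
and `t n ≤ 1 / ((n - 1) (n - 2)) - 1 / (n (n - 1))`, so that the sum over `n ≥ 250` telescopes
(`tail_sum_le`). The finite product is evaluated in exact rational arithmetic, and the
known decimals of `π` finish the estimate.
-/

namespace TwinPrime

/-- The relative defect of the accelerated Euler factor:
`(1 - (n - 1)⁻²) (1 - n⁻²)⁻¹ = 1 - t n`. -/
noncomputable def t (n : ℕ) : ℝ := (2 * (n : ℝ) - 1) / (((n : ℝ) - 1) ^ 3 * ((n : ℝ) + 1))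

/-- The odd primes below `250`. -/
def smallPrimes : Finset ℕ := (Finset.range 250).filter (fun n => n.Prime ∧ 2 < n)

lemma t_nonneg {n : ℕ} (hn : 2 < n) : 0 ≤ t n := by
  have h : (3 : ℝ) ≤ n := by exact_mod_cast hn
  unfold t
  have h1 : (0 : ℝ) < n - 1 := by linarith
  have h2 : (0 : ℝ) ≤ 2 * n - 1 := by linarith
  positivity

lemma t_le_telescope {n : ℕ} (hn : 2 < n) :
    t n ≤ 1 / (((n : ℝ) - 1) * (n - 2)) - 1 / ((n : ℝ) * (n - 1)) := by
  obtain ⟨m, rfl⟩ := Nat.exists_eq_add_of_le hn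
  have hm : (0 : ℝ) ≤ m := m.cast_nonneg
  unfold t
  push_cast
  have e1 : (3 + (m : ℝ) - 1) = m + 2 := by ring
  have e2 : (3 + (m : ℝ) - 2) = m + 1 := by ring
  rw [e1, e2, div_sub_div _ _ (by positivity) (by positivity),
    div_le_div_iff₀ (by positivity) (by positivity)]
  rw [← sub_nonneg]
  ring_nf
  positivity

lemma t_le_one {n : ℕ} (hn : 2 < n) : t n ≤ 1 := by
  have h : (3 : ℝ) ≤ n := by exact_mod_cast hn
  refine (t_le_telescope hn).trans ?_
  have h1 : 0 ≤ 1 / ((n : ℝ) * (n - 1)) := by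
    have : (0 : ℝ) < n - 1 := by linarith
    positivity
  have h2 : 1 / (((n : ℝ) - 1) * (n - 2)) ≤ 1 := by
    rw [div_le_one (by nlinarith)]
    nlinarith
  linarith

lemma factor_eq {n : ℕ} (hn : 2 < n) :
    (1 - 1 / ((n : ℝ) - 1) ^ 2) * (1 - 1 / (n : ℝ) ^ 2)⁻¹ = 1 - t n := by
  have h : (3 : ℝ) ≤ n := by exact_mod_cast hn
  have h1 : (n : ℝ) - 1 ≠ 0 := by linarith
  have h2 : (n : ℝ) + 1 ≠ 0 := by linarith
  have h3 : (n : ℝ) ≠ 0 := by linarith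
  have h4 : 1 - 1 / (n : ℝ) ^ 2 = (n - 1) * (n + 1) / (n : ℝ) ^ 2 := by
    field_simp
    ring
  rw [h4]
  unfold t
  field_simp
  ring

lemma one_sub_sum_le_prod (s : Finset ℕ) (x : ℕ → ℝ) (h0 : ∀ n ∈ s, 0 ≤ x n)
    (h1 : ∀ n ∈ s, x n ≤ 1) : 1 - ∑ n ∈ s, x n ≤ ∏ n ∈ s, (1 - x n) := by
  induction s using Finset.induction_on with
  | empty => simp
  | insert a s ha ih =>
    rw [Finset.prod_insert ha, Finset.sum_insert ha]
    have ih' := ih (fun n hn => h0 n (Finset.mem_insert_of_mem hn))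
      (fun n hn => h1 n (Finset.mem_insert_of_mem hn))
    have ha0 := h0 a (Finset.mem_insert_self a s)
    have ha1 := h1 a (Finset.mem_insert_self a s)
    have hs : 0 ≤ ∑ n ∈ s, x n :=
      Finset.sum_nonneg fun n hn => h0 n (Finset.mem_insert_of_mem hn)
    nlinarith [mul_le_mul_of_nonneg_left ih' (sub_nonneg.2 ha1), mul_nonneg ha0 hs]

lemma tail_sum_Ico_le (M : ℕ) (hM : 250 ≤ M) :
    ∑ n ∈ Finset.Ico 250 M, t n ≤ 1 / (249 * 248) - 1 / (((M : ℝ) - 1) * (M - 2)) := by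
  induction M, hM using Nat.le_induction with
  | base => norm_num
  | succ M hM ih =>
    rw [Finset.sum_Ico_succ_top hM]
    have h := t_le_telescope (n := M) (by omega)
    push_cast
    have e : ((M : ℝ) + 1 - 1) * (M + 1 - 2) = M * (M - 1) := by ring
    rw [e]
    linarith

lemma tail_sum_le (s : Finset ℕ) (hs : ∀ n ∈ s, 250 ≤ n) :
    ∑ n ∈ s, t n ≤ 1 / (249 * 248) := by
  obtain ⟨M, hMdef⟩ : ∃ M, M = s.sup id + 250 := ⟨_, rfl⟩
  have hsub : s ⊆ Finset.Ico 250 M := by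
    intro n hn
    have : n ≤ s.sup id := Finset.le_sup (f := id) hn
    exact Finset.mem_Ico.2 ⟨hs n hn, by omega⟩
  have h1 : ∑ n ∈ s, t n ≤ ∑ n ∈ Finset.Ico 250 M, t n :=
    Finset.sum_le_sum_of_subset_of_nonneg hsub fun n hn _ =>
      t_nonneg (by have := (Finset.mem_Ico.1 hn).1; omega)
  have h2 := tail_sum_Ico_le M (by omega)
  have hM : (250 : ℝ) ≤ M := by
    have : 250 ≤ M := by omega
    exact_mod_cast this
  have h3 : 0 ≤ 1 / (((M : ℝ) - 1) * (M - 2)) :=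
    one_div_nonneg.2 (mul_nonneg (by linarith) (by linarith))
  linarith

lemma smallProd_bounds :
    (0.814444 : ℝ) < ∏ n ∈ smallPrimes, (1 - t n) ∧ ∏ n ∈ smallPrimes, (1 - t n) < 0.81445 := by
  have h : (814444 / 1000000 : ℚ) <
      ∏ n ∈ smallPrimes, (1 - (2 * (n : ℚ) - 1) / (((n : ℚ) - 1) ^ 3 * ((n : ℚ) + 1))) ∧
      ∏ n ∈ smallPrimes, (1 - (2 * (n : ℚ) - 1) / (((n : ℚ) - 1) ^ 3 * ((n : ℚ) + 1)))
        < (81445 / 100000 : ℚ) := by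
    decide +kernel
  obtain ⟨h1, h2⟩ := h
  have h1' := (Rat.cast_lt (K := ℝ)).2 h1
  have h2' := (Rat.cast_lt (K := ℝ)).2 h2
  push_cast at h1' h2'
  unfold t
  constructor
  · refine lt_of_eq_of_lt ?_ h1'
    norm_num
  · refine lt_of_lt_of_eq h2' ?_
    norm_num

/-- Uniform bounds for the accelerated product over any finite set of odd primes that contains
those below `250`. -/
lemma prod_bounds (s : Finset ℕ) (hs : ∀ n ∈ s, n.Prime ∧ 2 < n) (hsub : smallPrimes ⊆ s) :
    0.814444 * (1 - 1 / (249 * 248)) ≤ ∏ n ∈ s, (1 - t n) ∧ ∏ n ∈ s, (1 - t n) ≤ 0.81445 := by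
  obtain ⟨hl, hu⟩ := smallProd_bounds
  rw [← Finset.prod_sdiff hsub]
  have hmem : ∀ n ∈ s \ smallPrimes, 2 < n ∧ 250 ≤ n := by
    intro n hn
    obtain ⟨h1, h2⟩ := Finset.mem_sdiff.1 hn
    refine ⟨(hs n h1).2, ?_⟩
    by_contra hlt
    exact h2 (Finset.mem_filter.2 ⟨Finset.mem_range.2 (by omega), hs n h1⟩)
  have hlow : 1 - 1 / (249 * 248) ≤ ∏ n ∈ s \ smallPrimes, (1 - t n) := by
    have h1 := one_sub_sum_le_prod (s \ smallPrimes) t (fun n hn => t_nonneg (hmem n hn).1)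
      (fun n hn => t_le_one (hmem n hn).1)
    have h2 := tail_sum_le (s \ smallPrimes) (fun n hn => (hmem n hn).2)
    linarith
  have hup : ∏ n ∈ s \ smallPrimes, (1 - t n) ≤ 1 :=
    Finset.prod_le_one (fun n hn => sub_nonneg.2 (t_le_one (hmem n hn).1))
      (fun n hn => sub_le_self _ (t_nonneg (hmem n hn).1))
  constructor
  · rw [mul_comm]
    exact mul_le_mul hlow hl.le (by norm_num) (le_trans (by norm_num) hlow)
  · refine le_trans (mul_le_of_le_one_left (le_trans (by norm_num) hl.le) hup) hu.le

/-- Passing to the limit in `prod_bounds`. -/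
lemma limit_bounds {B : ℝ}
    (hB : HasProd (fun p : {p : ℕ // p.Prime ∧ 2 < p} => 1 - t p) B) :
    0.814444 * (1 - 1 / (249 * 248)) ≤ B ∧ B ≤ 0.81445 := by
  have key : ∀ᶠ S : Finset {p : ℕ // p.Prime ∧ 2 < p} in Filter.atTop,
      0.814444 * (1 - 1 / (249 * 248)) ≤ ∏ p ∈ S, (1 - t p) ∧ ∏ p ∈ S, (1 - t p) ≤ 0.81445 := by
    filter_upwards [Filter.eventually_ge_atTop
      (smallPrimes.subtype fun p => p.Prime ∧ 2 < p)] with S hS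
    have h := prod_bounds (S.map (Function.Embedding.subtype _)) ?_ ?_
    · simpa using h
    · intro n hn
      obtain ⟨p, -, rfl⟩ := Finset.mem_map.1 hn
      exact p.2
    · intro n hn
      exact Finset.mem_map.2 ⟨⟨n, (Finset.mem_filter.1 hn).2⟩,
        hS (Finset.mem_subtype.2 hn), rfl⟩
  have hB' : Filter.Tendsto (fun S : Finset {p : ℕ // p.Prime ∧ 2 < p} => ∏ p ∈ S, (1 - t p))
      Filter.atTop (nhds B) := by
    simpa [HasProd] using hB
  exact ⟨ge_of_tendsto hB' (key.mono fun _ h => h.1), le_of_tendsto hB' (key.mono fun _ h => h.2)⟩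

/-- The completely multiplicative function `n ↦ n⁻²`, with value `1 / 0 = 0` at `0`. -/
noncomputable def invSq : ℕ →*₀ ℝ where
  toFun n := 1 / (n : ℝ) ^ 2
  map_zero' := by simp
  map_one' := by simp
  map_mul' m n := by push_cast; rw [mul_pow, one_div_mul_one_div]

lemma hasProd_odd :
    HasProd (fun p : {p : ℕ // p.Prime ∧ 2 < p} => (1 - 1 / (p : ℝ) ^ 2)⁻¹)
      (Real.pi ^ 2 / 8) := by
  have h1 : HasProd (fun p : Nat.Primes => (1 - 1 / (p : ℝ) ^ 2)⁻¹) (Real.pi ^ 2 / 6) := by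
    have h := EulerProduct.eulerProduct_completely_multiplicative_hasProd (f := invSq)
      hasSum_zeta_two.summable.norm
    have e : ∑' n, invSq n = Real.pi ^ 2 / 6 := hasSum_zeta_two.tsum_eq
    rw [e] at h
    exact h
  have h2 := (hasProd_subtype_iff_mulIndicator (s := {p : ℕ | p.Prime})
    (f := fun n : ℕ => (1 - 1 / (n : ℝ) ^ 2)⁻¹)).1 h1
  -- `3 / 4` is the inverse of the Euler factor at `2`.
  have h3 := h2.mul (hasProd_ite_eq 2 (3 / 4 : ℝ))
  have e : Real.pi ^ 2 / 6 * (3 / 4) = Real.pi ^ 2 / 8 := by ring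
  rw [e] at h3
  refine (hasProd_subtype_iff_mulIndicator (s := {p : ℕ | p.Prime ∧ 2 < p})
    (f := fun n : ℕ => (1 - 1 / (n : ℝ) ^ 2)⁻¹)).2 ?_
  convert h3 using 2 with n
  by_cases hn : n = 2
  · subst hn
    norm_num [Set.mulIndicator, Nat.prime_two]
  · have : (n.Prime ∧ 2 < n) ↔ n.Prime :=
      ⟨fun h => h.1, fun h => ⟨h, lt_of_le_of_ne h.two_le (Ne.symm hn)⟩⟩
    simp [Set.mulIndicator, hn, this]

lemma multipliable_twin :
    Multipliable (fun p : {p : ℕ // p.Prime ∧ 2 < p} => (1 - 1 / ((p : ℝ) - 1) ^ 2)) := by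
  have hs : Summable fun p : {p : ℕ // p.Prime ∧ 2 < p} => 4 * (1 / ((p : ℕ) : ℝ) ^ 2) :=
    (hasSum_zeta_two.summable.mul_left 4).comp_injective Subtype.val_injective
  have h := multipliable_one_add_of_summable
    (f := fun p : {p : ℕ // p.Prime ∧ 2 < p} => -(1 / ((p : ℝ) - 1) ^ 2)) ?_
  · simpa [sub_eq_add_neg] using h
  · refine Summable.of_nonneg_of_le (fun _ => norm_nonneg _) (fun p => ?_) hs
    have h3 : (3 : ℝ) ≤ (p : ℕ) := by exact_mod_cast p.2.2
    have h1 : (0 : ℝ) < (p : ℕ) - 1 := by linarith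
    rw [norm_neg, Real.norm_of_nonneg (by positivity), mul_one_div,
      div_le_div_iff₀ (by positivity) (by positivity)]
    nlinarith

end TwinPrime

/-- The infinite product `∏_{p prime, p > 2} (1 - 1/(p-1)^2)` converges (is multipliable),
and the twin prime constant `C₂ = 2 * ∏_{p prime, p > 2} (1 - 1/(p-1)^2)` is positive and
satisfies `1.3203 < C₂ < 1.3204`. -/
theorem twin_prime_constant_bounds :
    Multipliable (fun p : {p : ℕ // p.Prime ∧ 2 < p} => (1 - 1 / ((p : ℝ) - 1) ^ 2)) ∧
    0 < 2 * ∏' p : {p : ℕ // p.Prime ∧ 2 < p}, (1 - 1 / ((p : ℝ) - 1) ^ 2) ∧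
    (1.3203 : ℝ) < 2 * ∏' p : {p : ℕ // p.Prime ∧ 2 < p}, (1 - 1 / ((p : ℝ) - 1) ^ 2) ∧
    2 * ∏' p : {p : ℕ // p.Prime ∧ 2 < p}, (1 - 1 / ((p : ℝ) - 1) ^ 2) < (1.3204 : ℝ) := by
  have hm := TwinPrime.multipliable_twin
  have hB := hm.hasProd.mul TwinPrime.hasProd_odd
  set A := ∏' p : {p : ℕ // p.Prime ∧ 2 < p}, (1 - 1 / ((p : ℝ) - 1) ^ 2) with hA
  simp only [fun p : {p : ℕ // p.Prime ∧ 2 < p} => TwinPrime.factor_eq p.2.2] at hB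
  obtain ⟨hl, hu⟩ := TwinPrime.limit_bounds hB
  have hp1 : (9.869604 : ℝ) < Real.pi ^ 2 := by nlinarith [Real.pi_gt_d20]
  have hp2 : Real.pi ^ 2 < (9.869605 : ℝ) := by nlinarith [Real.pi_lt_d20, Real.pi_pos]
  have hl' : (1.3203 : ℝ) < 2 * A := by
    by_contra hcon
    have h : 2 * A * Real.pi ^ 2 ≤ 1.3203 * Real.pi ^ 2 :=
      mul_le_mul_of_nonneg_right (not_lt.1 hcon) (sq_nonneg _)
    norm_num at hl hcon h
    linarith
  have hu' : 2 * A < (1.3204 : ℝ) := by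
    by_contra hcon
    have h : 1.3204 * Real.pi ^ 2 ≤ 2 * A * Real.pi ^ 2 :=
      mul_le_mul_of_nonneg_right (not_lt.1 hcon) (sq_nonneg _)
    norm_num at hu hcon h
    linarith
  exact ⟨hm, lt_trans (by norm_num) hl', hl', hu'⟩
end

section
/- The sum of the reciprocals of all twin primes, B₂ = (1/3 + 1/5) + (1/5 + 1/7) + (1/11 + 1/13) + ..., i.e. the sum over all primes p with p + 2 also prime of (1/p + 1/(p+2)), converges to a finite value (Brun's constant). -/
/-!
The proof is Brun's pure sieve. Every twin prime `p < x` that is at least `z` is an `n < x` such that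
`n * (n + 2)` has no odd prime factor below `z`. Inclusion–exclusion over these primes, cut at an
even level `r`, bounds the number of such `n` from above (`Brun.bonferroni`), and the Chinese
remainder theorem evaluates each term up to an error `2 ^ #U` (`Brun.abs_count_twin_sub_le`). This
gives `Brun.brun_sieve`: a main term `x ∏ (1 - 2 / p)`, a truncation error, and a remainder at most
`(2 * π(z) + 1) ^ r`.

Two facts on primes are needed. The main term is `O(x / log² z)` by Euler's inequality
`log z ≤ ∏ (1 - 1 / p)⁻¹`. The truncation error is controlled by Rankin's trick together with
`∑_{p < z} 1 / p = O(1 + log log z)`, which follows from Chebyshev's bound; it permits `r` to be of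
order `log log x`.

With `x = 2 ^ k` and `log z` of order `k ^ (3 / 4)`, the number of twin primes below `2 ^ k` is
`O(2 ^ k * k ^ (-3 / 2))` (`Brun.eventually_twinCount_le`). This is weaker than what the method can
give, but the exponent exceeds `1`, so the contributions of the dyadic blocks `[2 ^ k, 2 ^ (k + 1))`
to the sum of reciprocals are summable.
-/

namespace Brun
open Finset

/-! ### Sums and products over primes -/

/-- Dyadic decomposition of a sum over `n < 2 ^ K`. -/
theorem sum_range_two_pow (f : ℕ → ℝ) (K : ℕ) :
    ∑ n ∈ range (2 ^ K), f n = f 0 + ∑ k ∈ range K, ∑ n ∈ Ico (2 ^ k) (2 ^ (k + 1)), f n := by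
  induction K with
  | zero => simp
  | succ K ih =>
    rw [sum_range_succ, ← add_assoc, ← ih, range_eq_Ico, range_eq_Ico,
      sum_Ico_consecutive _ (Nat.zero_le _) (Nat.pow_le_pow_right two_pos K.le_succ)]

/-- Chebyshev's bound `θ(x) ≤ x log 4` on a dyadic block: each prime `p` there has
`log p ≥ k log 2`, so there are at most `4 * 2 ^ k / k` of them. -/
theorem sum_inv_primes_block (k : ℕ) (hk : 1 ≤ k) :
    ∑ p ∈ Ico ((2 : ℕ) ^ k) (2 ^ (k + 1)), (if p.Prime then (1 : ℝ) / p else 0) ≤ 4 / k := by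
  have hl2 : 0 < Real.log 2 := Real.log_pos one_lt_two
  have hk' : (0 : ℝ) < k := by exact_mod_cast hk
  have hterm : ∀ p ∈ Ico ((2 : ℕ) ^ k) (2 ^ (k + 1)), (if p.Prime then (1 : ℝ) / p else 0) ≤
      (if p.Prime then Real.log p else 0) / (k * Real.log 2 * 2 ^ k) := by
    intro p hp
    split_ifs with hpp
    · rw [mem_Ico] at hp
      have hp2 : (2 : ℝ) ^ k ≤ p := by exact_mod_cast hp.1
      have hlog : k * Real.log 2 ≤ Real.log p := by
        rw [← Real.log_pow]
        exact Real.log_le_log (by positivity) hp2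
      rw [div_le_div_iff₀ (by linarith [pow_pos (two_pos : (0 : ℝ) < 2) k]) (by positivity), one_mul]
      exact mul_le_mul hlog hp2 (by positivity) ((by positivity : (0 : ℝ) ≤ _).trans hlog)
    · simp
  refine (sum_le_sum hterm).trans ?_
  rw [← sum_div, ← sum_filter]
  have hθ : ∑ p ∈ Ico ((2 : ℕ) ^ k) (2 ^ (k + 1)) with p.Prime, Real.log p ≤
      Real.log 4 * (2 ^ (k + 1) : ℝ) := by
    refine le_trans ?_ (Chebyshev.theta_le_log4_mul_x (x := 2 ^ (k + 1)) (by positivity))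
    rw [Chebyshev.theta_eq_sum_Icc]
    refine sum_le_sum_of_subset_of_nonneg ?_ (fun p _ _ => Real.log_natCast_nonneg p)
    intro p hp
    have hfl : ⌊(2 : ℝ) ^ (k + 1)⌋₊ = 2 ^ (k + 1) := by
      have := Nat.floor_natCast (R := ℝ) (2 ^ (k + 1))
      rwa [Nat.cast_pow, Nat.cast_two] at this
    rw [hfl]
    simp only [mem_filter, mem_Ico, mem_Icc] at hp ⊢
    exact ⟨⟨Nat.zero_le _, hp.1.2.le⟩, hp.2⟩
  have h4 : Real.log 4 = 2 * Real.log 2 := by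
    rw [show (4 : ℝ) = 2 ^ 2 by norm_num, Real.log_pow]; norm_num
  rw [div_le_div_iff₀ (by positivity) hk']
  calc _ ≤ Real.log 4 * (2 ^ (k + 1) : ℝ) * k := by gcongr
    _ = _ := by rw [h4]; ring

/-- A crude form of the upper bound in Mertens' second theorem, `∑_{p < 2 ^ M} 1 / p = O(1 + log M)`;
the value of the constant only affects the choice of the truncation level of the sieve. -/
theorem sum_inv_primes_le (M : ℕ) (hM : 1 ≤ M) :
    ∑ p ∈ Nat.primesBelow (2 ^ M), (1 : ℝ) / p ≤ 4 + 4 * Real.log M := by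
  rw [Nat.primesBelow, sum_filter, sum_range_two_pow]
  obtain ⟨m, rfl⟩ := Nat.exists_eq_add_of_le' hM
  rw [sum_range_succ']
  have h0 : ∑ p ∈ Ico ((2 : ℕ) ^ 0) (2 ^ (0 + 1)), (if p.Prime then (1 : ℝ) / p else 0) = 0 := by
    simp [Nat.not_prime_one]
  rw [h0, if_neg Nat.not_prime_zero, zero_add, add_zero]
  have hh := harmonic_le_one_add_log m
  have hl : Real.log m ≤ Real.log (m + 1 : ℕ) := by
    rcases m.eq_zero_or_pos with rfl | h
    · simp
    · exact Real.log_le_log (by exact_mod_cast h) (by push_cast; linarith)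
  calc _ ≤ ∑ k ∈ range m, 4 / ((k + 1 : ℕ) : ℝ) :=
        sum_le_sum fun k _ => sum_inv_primes_block (k + 1) (by omega)
    _ = 4 * (harmonic m : ℝ) := by
        rw [harmonic, mul_comm]; push_cast; rw [sum_mul]
        exact sum_congr rfl fun k _ => by rw [div_eq_mul_inv, mul_comm]
    _ ≤ _ := by linarith

/-- Euler's lower bound: expanding the product gives the sum of `1 / n` over the `N`-smooth `n`,
which include all `1 ≤ n < N`. -/
theorem log_le_prod_primesBelow (N : ℕ) (hN : 1 ≤ N) :
    Real.log N ≤ ∏ p ∈ Nat.primesBelow N, (1 - (1 : ℝ) / p)⁻¹ := by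
  let f : ℕ →* ℝ :=
    { toFun := fun n => (1 : ℝ) / n
      map_one' := by simp
      map_mul' := fun a b => by push_cast; rw [one_div_mul_one_div] }
  have hf : ∀ {p : ℕ}, p.Prime → ‖f p‖ < 1 := by
    intro p hp
    have : (1 : ℝ) < p := by exact_mod_cast hp.one_lt
    change ‖(1 : ℝ) / p‖ < 1
    rw [Real.norm_of_nonneg (by positivity), div_lt_one (by linarith)]
    exact this
  obtain ⟨-, hs⟩ := EulerProduct.summable_and_hasSum_smoothNumbers_prod_primesBelow_geometric hf N
  obtain ⟨m, rfl⟩ := Nat.exists_eq_add_of_le' hN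
  refine (log_add_one_le_harmonic m).trans ?_
  have hmem : ∀ i : Fin m, (i : ℕ) + 1 ∈ (m + 1).smoothNumbers := fun i =>
    Nat.mem_smoothNumbers_of_lt (Nat.succ_pos _) (by omega)
  let g : Fin m ↪ (m + 1).smoothNumbers :=
    ⟨fun i => ⟨i + 1, hmem i⟩, fun i j h => by
      have := congrArg Subtype.val h
      exact Fin.ext (by simpa using this)⟩
  have := sum_le_hasSum (univ.map g) (fun n _ => by
    change (0 : ℝ) ≤ 1 / (n : ℕ); positivity) hs
  refine le_trans (le_of_eq ?_) this
  rw [sum_map, harmonic, sum_range]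
  push_cast
  refine sum_congr rfl fun i _ => ?_
  change _ = (1 : ℝ) / ((i : ℕ) + 1 : ℕ)
  push_cast; simp

/-- The odd primes below `z`. -/
def oddPrimes (z : ℕ) : Finset ℕ := (Nat.primesBelow z).erase 2

theorem prime_of_mem {z p : ℕ} (hp : p ∈ oddPrimes z) : p.Prime :=
  Nat.prime_of_mem_primesBelow (mem_of_mem_erase hp)

theorem three_le_of_mem {z p : ℕ} (hp : p ∈ oddPrimes z) : 3 ≤ p := by
  have := (prime_of_mem hp).two_le
  have := ne_of_mem_erase hp
  omega

/-- The main term of the sieve has size `O(1 / log² z)`, because `1 - 2 / p ≤ (1 - 1 / p) ^ 2`. The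
prime `2` is absent from the product and costs the factor `4`. -/
theorem prod_oddPrimes_le (z : ℕ) (hz : 3 ≤ z) :
    ∏ p ∈ oddPrimes z, (1 - (2 : ℝ) / p) ≤ 4 / Real.log z ^ 2 := by
  have hlog : 0 < Real.log z := Real.log_pos (by exact_mod_cast (by omega : 1 < z))
  have h := log_le_prod_primesBelow z (by omega)
  have h2 : 2 ∈ Nat.primesBelow z := Nat.mem_primesBelow.mpr ⟨by omega, Nat.prime_two⟩
  rw [← mul_prod_erase _ _ h2, prod_inv_distrib] at h
  change _ ≤ _ * (∏ p ∈ oddPrimes z, (1 - (1 : ℝ) / p))⁻¹ at h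
  have hpos : 0 < ∏ p ∈ oddPrimes z, (1 - (1 : ℝ) / p) := by
    refine prod_pos fun p hp => ?_
    have : (3 : ℝ) ≤ p := by exact_mod_cast three_le_of_mem hp
    rw [sub_pos, div_lt_one (by linarith)]; linarith
  have h1 : ∏ p ∈ oddPrimes z, (1 - (2 : ℝ) / p) ≤ (∏ p ∈ oddPrimes z, (1 - (1 : ℝ) / p)) ^ 2 := by
    rw [← prod_pow]
    refine prod_le_prod (fun p hp => ?_) (fun p hp => ?_)
    · have : (3 : ℝ) ≤ p := by exact_mod_cast three_le_of_mem hp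
      rw [sub_nonneg, div_le_one (by linarith)]; linarith
    · have : (2 : ℝ) / p = 2 * (1 / p) := by ring
      rw [this]; nlinarith [sq_nonneg ((1 : ℝ) / p)]
  refine h1.trans ?_
  set X := ∏ p ∈ oddPrimes z, (1 - (1 : ℝ) / p)
  have h3 : X ≤ 2 / Real.log z := by
    rw [le_div_iff₀ hlog]
    norm_num at h
    rw [← div_eq_mul_inv, le_div_iff₀ hpos] at h
    linarith
  calc X ^ 2 ≤ (2 / Real.log z) ^ 2 := by gcongr
    _ = _ := by rw [div_pow]; norm_num

/-! ### Truncated inclusion–exclusion -/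

/-- The Bonferroni inequality: cutting the inclusion–exclusion sum at an even level overestimates
it. `T` plays the role of the set of sieving primes dividing `n * (n + 2)`. -/
theorem bonferroni (T : Finset ℕ) (r : ℕ) (hr : Even r) :
    (if T = ∅ then (1 : ℝ) else 0) ≤ ∑ U ∈ T.powerset with #U ≤ r, (-1 : ℝ) ^ #U := by
  have key : ∑ U ∈ T.powerset with #U ≤ r, (-1 : ℝ) ^ #U =
      ∑ i ∈ range (r + 1), (-1 : ℝ) ^ i * (#T).choose i := by
    rw [sum_filter, ← sum_fiberwise_of_maps_to (s := T.powerset) (t := range (#T + r + 1))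
      (g := fun U => #U)]
    · rw [← sum_subset (range_subset_range.mpr (by omega : r + 1 ≤ #T + r + 1))]
      · refine sum_congr rfl fun i hi => ?_
        rw [← powersetCard_eq_filter, ← card_powersetCard i T, mul_comm, ← nsmul_eq_mul,
          ← sum_const]
        refine sum_congr rfl fun U hU => ?_
        rw [(mem_powersetCard.mp hU).2, if_pos (by rw [mem_range] at hi; omega)]
      · intro i _ hi
        refine sum_eq_zero fun U hU => if_neg ?_
        rw [mem_filter] at hU
        rw [mem_range] at hi
        omega
    · intro U hU
      have := card_le_card (mem_powerset.mp hU)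
      rw [mem_range]; omega
  rw [key]
  split_ifs with h
  · subst h
    rw [sum_range_succ']
    simp
  · obtain ⟨m, hm⟩ := Nat.exists_eq_add_of_le' (card_pos.mpr (nonempty_iff_ne_empty.mpr h))
    have := @Int.alternating_sum_range_choose_eq_choose m r
    rw [hm]
    have h2 : ∑ i ∈ range (r + 1), (-1 : ℝ) ^ i * ((m + 1).choose i) =
        (-1) ^ r * (m.choose r) := by exact_mod_cast this
    rw [h2, hr.neg_one_pow]
    positivity

/-- Replaces the truncated sum by the full product, at the cost of a tail bounded by Rankin's
trick: each term with `#U > r` is weighted by `exp (#U - r) ≥ 1`, and the weighted sum over all `U`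
factors. -/
theorem tail_le (P : Finset ℕ) (g : ℕ → ℝ) (hg : ∀ p ∈ P, 0 ≤ g p) (r : ℕ) :
    ∑ U ∈ P.powerset with #U ≤ r, (-1 : ℝ) ^ #U * ∏ p ∈ U, g p ≤
      ∏ p ∈ P, (1 - g p) + Real.exp (Real.exp 1 * ∑ p ∈ P, g p - r) := by
  have hU : ∀ U ∈ P.powerset, 0 ≤ ∏ p ∈ U, g p := fun U hU =>
    prod_nonneg fun p hp => hg p (mem_powerset.mp hU hp)
  have h1 : ∏ p ∈ P, (1 - g p) = ∑ U ∈ P.powerset, (-1 : ℝ) ^ #U * ∏ p ∈ U, g p := by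
    simp_rw [sub_eq_neg_add]
    rw [prod_add]
    refine sum_congr rfl fun U _ => ?_
    rw [prod_const_one, mul_one, prod_neg]
  have h2 : ∑ U ∈ P.powerset, Real.exp (#U - r) * ∏ p ∈ U, g p ≤
      Real.exp (Real.exp 1 * ∑ p ∈ P, g p - r) := by
    have : ∑ U ∈ P.powerset, Real.exp (#U - r) * ∏ p ∈ U, g p =
        Real.exp (-r) * ∏ p ∈ P, (Real.exp 1 * g p + 1) := by
      rw [prod_add, mul_sum]
      refine sum_congr rfl fun U _ => ?_
      rw [prod_const_one, mul_one, prod_mul_distrib, prod_const, ← Real.exp_nat_mul, ← mul_assoc,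
        ← Real.exp_add]
      congr 2; ring
    rw [this, sub_eq_neg_add, Real.exp_add, mul_sum, Real.exp_sum]
    refine mul_le_mul_of_nonneg_left (prod_le_prod (fun p hp => ?_) fun p _ =>
      Real.add_one_le_exp _) (Real.exp_pos _).le
    have := hg p hp
    positivity
  rw [h1, sum_filter, ← sub_le_iff_le_add', ← sum_sub_distrib]
  refine le_trans (sum_le_sum fun U hUm => ?_) h2
  have := hU U hUm
  split_ifs with hc
  · rw [sub_self]; positivity
  · rw [zero_sub, ← neg_mul]
    gcongr
    have h3 : (1 : ℝ) ≤ Real.exp (#U - r) := by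
      rw [Real.one_le_exp_iff, sub_nonneg]; exact_mod_cast (by omega : r ≤ #U)
    refine le_trans ?_ h3
    rcases neg_one_pow_eq_or ℝ #U with h | h <;> rw [h] <;> norm_num

theorem sum_two_pow_card_le (P : Finset ℕ) (r : ℕ) :
    ∑ U ∈ P.powerset with #U ≤ r, (2 : ℝ) ^ #U ≤ (2 * #P + 1) ^ r := by
  have key : ∑ U ∈ P.powerset with #U ≤ r, (2 : ℝ) ^ #U =
      ∑ i ∈ range (r + 1), (2 : ℝ) ^ i * (#P).choose i := by
    rw [← sum_fiberwise_of_maps_to (s := P.powerset.filter (#· ≤ r)) (t := range (r + 1))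
      (g := fun U => #U)]
    · refine sum_congr rfl fun i hi => ?_
      rw [← card_powersetCard i P, mul_comm, ← nsmul_eq_mul, ← sum_const]
      refine Finset.sum_congr ?_ fun U hU => ?_
      · ext U
        simp only [mem_filter, mem_powerset, mem_powersetCard, mem_range] at hi ⊢
        constructor
        · rintro ⟨⟨a, _⟩, b⟩; exact ⟨a, b⟩
        · rintro ⟨a, b⟩; exact ⟨⟨a, by omega⟩, b⟩
      · rw [(mem_powersetCard.mp hU).2]
    · intro U hU
      rw [mem_filter] at hU
      rw [mem_range]; omega
  rw [key, add_pow]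
  refine sum_le_sum fun i hi => ?_
  rw [mem_range] at hi
  rw [one_pow, mul_one, mul_pow, mul_assoc]
  gcongr
  calc ((#P).choose i : ℝ) ≤ (#P : ℝ) ^ i := by exact_mod_cast Nat.choose_le_pow _ _
    _ ≤ _ := le_mul_of_one_le_right (by positivity)
      (by exact_mod_cast Nat.choose_pos (by omega))

/-! ### Counting solutions of congruences -/

theorem abs_count_class_sub_le (N d v : ℕ) (hd : 0 < d) :
    |((#{n ∈ range N | n ≡ v [MOD d]} : ℕ) : ℝ) - N / d| ≤ 1 := by
  have hd' : (0 : ℝ) < d := by exact_mod_cast hd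
  rw [← Nat.count_eq_card_filter_range, Nat.count_modEq_card _ hd]
  have h1 : (N : ℝ) / d = (N / d : ℕ) + (N % d : ℕ) / d := by
    rw [eq_comm, ← sub_eq_zero]
    field_simp
    have := Nat.div_add_mod N d
    have h : (d : ℝ) * (N / d : ℕ) + (N % d : ℕ) = N := by exact_mod_cast this
    linarith
  have h2 : ((N % d : ℕ) : ℝ) / d < 1 := by
    rw [div_lt_one hd']; exact_mod_cast Nat.mod_lt _ hd
  have h3 : (0 : ℝ) ≤ ((N % d : ℕ) : ℝ) / d := by positivity
  rw [h1, abs_le]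
  push_cast
  split_ifs <;> constructor <;> linarith

/-- By the Chinese remainder theorem, one residue condition modulo each prime of `U` selects a
single residue class modulo `∏ p ∈ U, p`. -/
theorem abs_count_crt_sub_le (N : ℕ) (U : Finset ℕ) (hU : ∀ p ∈ U, p.Prime) (a : ℕ → ℕ) :
    |((#{n ∈ range N | ∀ p ∈ U, n ≡ a p [MOD p]} : ℕ) : ℝ) - N * ∏ p ∈ U, (1 : ℝ) / p| ≤ 1 := by
  have hco : (U : Set ℕ).Pairwise (fun i j => Nat.Coprime i j) := fun p hp q hq hpq =>
    (Nat.coprime_primes (hU p hp) (hU q hq)).mpr hpq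
  have hne : ∀ p ∈ U, id p ≠ 0 := fun p hp => (hU p hp).ne_zero
  obtain ⟨c, hc⟩ := Nat.chineseRemainderOfFinset a id U hne hco
  have heq : ∀ n, (∀ p ∈ U, n ≡ a p [MOD p]) ↔ n ≡ c [MOD ∏ p ∈ U, p] := by
    intro n
    rw [Nat.modEq_iff_dvd, Nat.cast_prod]
    constructor
    · intro h
      refine prod_dvd_of_coprime ?_ fun p hp => ?_
      · intro p hp q hq hpq
        exact Nat.isCoprime_iff_coprime.mpr (hco hp hq hpq)
      · exact ((h p hp).trans (hc p hp).symm).dvd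
    · intro h p hp
      exact ((Nat.modEq_iff_dvd.mpr ((dvd_prod_of_mem (fun p : ℕ => (p : ℤ)) hp).trans h))).trans
        (hc p hp)
  simp_rw [heq]
  have := abs_count_class_sub_le N (∏ p ∈ U, p) c (prod_pos fun p hp => (hU p hp).pos)
  convert this using 3
  rw [Nat.cast_prod, div_eq_mul_inv, ← prod_inv_distrib]
  simp

/-- For odd primes `p`, the condition `p ∣ n * (n + 2)` is the disjoint union of `n ≡ 0` and
`n ≡ -2` modulo `p`, so the condition for all `p ∈ U` consists of `2 ^ #U` systems of congruences. -/
theorem abs_count_twin_sub_le (N : ℕ) (U : Finset ℕ) (hU : ∀ p ∈ U, p.Prime)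
    (h3 : ∀ p ∈ U, 3 ≤ p) :
    |((#{n ∈ range N | ∀ p ∈ U, p ∣ n * (n + 2)} : ℕ) : ℝ) - N * ∏ p ∈ U, (2 : ℝ) / p|
      ≤ 2 ^ #U := by
  -- the residues prescribed by `V`: `0` on `V`, and `p - 2 ≡ -2` elsewhere
  let a : Finset ℕ → ℕ → ℕ := fun V p => if p ∈ V then 0 else p - 2
  have hdvd : ∀ p ∈ U, ∀ n, n ≡ p - 2 [MOD p] ↔ p ∣ n + 2 := by
    intro p hp n
    have h := h3 p hp
    rw [← Nat.modEq_zero_iff_dvd]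
    constructor
    · intro hn
      have := hn.add_right 2
      rw [Nat.sub_add_cancel (by omega)] at this
      exact this.trans (by simp [Nat.ModEq])
    · intro hn
      refine Nat.ModEq.add_right_cancel' 2 ?_
      rw [Nat.sub_add_cancel (by omega)]
      exact hn.trans (by simp [Nat.ModEq])
  -- split according to the set `V` of those `p ∈ U` that divide `n`; the others divide `n + 2`
  have hpart : {n ∈ range N | ∀ p ∈ U, p ∣ n * (n + 2)} =
      U.powerset.biUnion fun V => {n ∈ range N | ∀ p ∈ U, n ≡ a V p [MOD p]} := by
    ext n
    simp only [mem_filter, mem_biUnion, mem_powerset]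
    constructor
    · rintro ⟨hn, h⟩
      refine ⟨U.filter (· ∣ n), filter_subset _ _, hn, fun p hp => ?_⟩
      by_cases hpn : p ∣ n
      · simp only [a, mem_filter, hp, hpn, and_self, if_true]
        exact Nat.modEq_zero_iff_dvd.mpr hpn
      · simp only [a, mem_filter, hp, hpn, and_false, if_false]
        exact (hdvd p hp n).mpr (((hU p hp).dvd_mul.mp (h p hp)).resolve_left hpn)
    · rintro ⟨V, -, hn, h⟩
      refine ⟨hn, fun p hp => ?_⟩
      have := h p hp
      by_cases hpV : p ∈ V
      · simp only [a, hpV, if_true] at this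
        exact (Nat.modEq_zero_iff_dvd.mp this).mul_right _
      · simp only [a, hpV, if_false] at this
        exact ((hdvd p hp n).mp this).mul_left _
  have hdisj : (U.powerset : Set (Finset ℕ)).PairwiseDisjoint
      fun V => {n ∈ range N | ∀ p ∈ U, n ≡ a V p [MOD p]} := by
    intro V hV W hW hne
    refine disjoint_left.mpr fun n hnV hnW => hne ?_
    simp only [mem_filter] at hnV hnW
    simp only [coe_powerset, Set.mem_preimage, Set.mem_powerset_iff, coe_subset] at hV hW
    have hchar : ∀ V' : Finset ℕ, (∀ p ∈ U, n ≡ a V' p [MOD p]) → ∀ p ∈ U, (p ∈ V' ↔ p ∣ n) := by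
      intro V' h p hp
      have := h p hp
      by_cases hpV : p ∈ V'
      · simp only [a, hpV, if_true] at this
        exact iff_of_true hpV (Nat.modEq_zero_iff_dvd.mp this)
      · simp only [a, hpV, if_false] at this
        refine iff_of_false hpV fun hpn => ?_
        have h2 := (Nat.dvd_add_right hpn).mp ((hdvd p hp n).mp this)
        have := Nat.le_of_dvd two_pos h2
        have := h3 p hp
        omega
    ext p
    constructor
    · intro hp
      exact (hchar W hnW.2 p (hV hp)).mpr ((hchar V hnV.2 p (hV hp)).mp hp)
    · intro hp
      exact (hchar V hnV.2 p (hW hp)).mpr ((hchar W hnW.2 p (hW hp)).mp hp)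
  have hmain : (N : ℝ) * ∏ p ∈ U, (2 : ℝ) / p = ∑ _V ∈ U.powerset, N * ∏ p ∈ U, (1 : ℝ) / p := by
    rw [sum_const, card_powerset, nsmul_eq_mul]
    simp_rw [div_eq_mul_inv, prod_mul_distrib, prod_const]
    push_cast
    ring
  rw [hpart, card_biUnion hdisj, hmain, Nat.cast_sum, ← sum_sub_distrib]
  refine (abs_sum_le_sum_abs _ _).trans ?_
  refine (sum_le_sum fun V _ => abs_count_crt_sub_le N U hU (a V)).trans ?_
  rw [sum_const, card_powerset, nsmul_eq_mul]
  simp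

/-! ### The sieve bound -/

/-- Brun's pure sieve for `n * (n + 2)`, with truncation level `r`. -/
theorem brun_sieve (N : ℕ) (P : Finset ℕ) (hP : ∀ p ∈ P, p.Prime) (h3 : ∀ p ∈ P, 3 ≤ p)
    (r : ℕ) (hr : Even r) :
    ((#{n ∈ range N | ∀ p ∈ P, ¬ p ∣ n * (n + 2)} : ℕ) : ℝ) ≤
      N * (∏ p ∈ P, (1 - (2 : ℝ) / p) + Real.exp (Real.exp 1 * ∑ p ∈ P, (2 : ℝ) / p - r)) +
        (2 * #P + 1) ^ r := by
  let T : ℕ → Finset ℕ := fun n => P.filter (· ∣ n * (n + 2))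
  have hTsub : ∀ n U, U ∈ P.powerset ∧ (∀ p ∈ U, p ∣ n * (n + 2)) ↔ U ∈ (T n).powerset := by
    intro n U
    simp only [T, mem_powerset, subset_iff, mem_filter]
    exact forall_and.symm.trans (forall_congr' fun p => imp_and.symm)
  calc ((#{n ∈ range N | ∀ p ∈ P, ¬ p ∣ n * (n + 2)} : ℕ) : ℝ)
      = ∑ n ∈ range N, (if T n = ∅ then (1 : ℝ) else 0) := by
        rw [card_filter, Nat.cast_sum]
        refine sum_congr rfl fun n _ => ?_
        simp only [T, filter_eq_empty_iff]
        split_ifs <;> simp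
    _ ≤ ∑ n ∈ range N, ∑ U ∈ (T n).powerset with #U ≤ r, (-1 : ℝ) ^ #U :=
        sum_le_sum fun n _ => bonferroni _ r hr
    _ = ∑ n ∈ range N, ∑ U ∈ P.powerset with #U ≤ r,
          (if ∀ p ∈ U, p ∣ n * (n + 2) then (-1 : ℝ) ^ #U else 0) := by
        refine sum_congr rfl fun n _ => ?_
        rw [← sum_filter, filter_filter]
        refine sum_congr ?_ fun _ _ => rfl
        ext U
        rw [mem_filter, mem_filter, ← hTsub]
        tauto
    _ = ∑ U ∈ P.powerset with #U ≤ r,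
          (-1 : ℝ) ^ #U * (#{n ∈ range N | ∀ p ∈ U, p ∣ n * (n + 2)} : ℕ) := by
        rw [sum_comm]
        refine sum_congr rfl fun U _ => ?_
        rw [← sum_filter, sum_const, nsmul_eq_mul, mul_comm]
    _ ≤ ∑ U ∈ P.powerset with #U ≤ r,
          (N * ((-1 : ℝ) ^ #U * ∏ p ∈ U, (2 : ℝ) / p) + 2 ^ #U) := by
        refine sum_le_sum fun U hU => ?_
        have hUP := mem_powerset.mp (mem_filter.mp hU).1
        have := abs_le.mp (abs_count_twin_sub_le N U (fun p hp => hP p (hUP hp))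
          (fun p hp => h3 p (hUP hp)))
        rcases neg_one_pow_eq_or ℝ #U with h | h <;> rw [h] <;> linarith [this.1, this.2]
    _ ≤ _ := by
        rw [sum_add_distrib, ← mul_sum]
        gcongr
        · exact tail_le P (fun p => 2 / p) (fun p _ => by positivity) r
        · exact sum_two_pow_card_le P r

/-- The number of `p < N` such that `p` and `p + 2` are both prime. -/
def twinCount (N : ℕ) : ℕ := #{p ∈ range N | p.Prime ∧ (p + 2).Prime}

/-- The sieve applied with `x = 2 ^ k` and sieving limit `z = 2 ^ M`: a twin prime `p < x` is either
less than `z` or survives the sieve. -/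
theorem twinCount_two_pow_le (k M r : ℕ) (hM : 2 ≤ M) (hr : Even r) :
    (twinCount (2 ^ k) : ℝ) ≤ 2 ^ M + 2 ^ k * (4 / (M * Real.log 2) ^ 2 +
      Real.exp (Real.exp 1 * (8 + 8 * Real.log M) - r)) + 2 ^ ((M + 1) * r) := by
  have hz : 3 ≤ 2 ^ M := by
    calc 3 ≤ 2 ^ 2 := by norm_num
      _ ≤ 2 ^ M := Nat.pow_le_pow_right two_pos hM
  have hsub : {p ∈ range (2 ^ k) | p.Prime ∧ (p + 2).Prime} ⊆ range (2 ^ M) ∪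
      {n ∈ range (2 ^ k) | ∀ p ∈ oddPrimes (2 ^ M), ¬ p ∣ n * (n + 2)} := by
    intro p hp
    obtain ⟨hpk, hp1, hp2⟩ := mem_filter.mp hp
    rw [mem_union, mem_range, mem_filter]
    refine (lt_or_ge p (2 ^ M)).imp_right fun hpM => ⟨hpk, fun q hq hdvd => ?_⟩
    have hqM := Nat.lt_of_mem_primesBelow (mem_of_mem_erase hq)
    rcases (prime_of_mem hq).dvd_mul.mp hdvd with h | h
    · have := (Nat.prime_dvd_prime_iff_eq (prime_of_mem hq) hp1).mp h
      omega
    · have := (Nat.prime_dvd_prime_iff_eq (prime_of_mem hq) hp2).mp h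
      omega
  have hcard : (twinCount (2 ^ k) : ℝ) ≤ 2 ^ M +
      (#{n ∈ range (2 ^ k) | ∀ p ∈ oddPrimes (2 ^ M), ¬ p ∣ n * (n + 2)} : ℕ) := by
    have := (card_le_card hsub).trans (card_union_le _ _)
    rw [card_range] at this
    exact_mod_cast this
  have hs := brun_sieve (2 ^ k) (oddPrimes (2 ^ M)) (fun p => prime_of_mem)
    (fun p => three_le_of_mem) r hr
  have h1 := prod_oddPrimes_le (2 ^ M) hz
  rw [Nat.cast_pow, Nat.cast_two, Real.log_pow] at h1
  have h2 : ∑ p ∈ oddPrimes (2 ^ M), (2 : ℝ) / p ≤ 8 + 8 * Real.log M := by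
    have h := sum_inv_primes_le M (by omega)
    have h' : ∑ p ∈ oddPrimes (2 ^ M), (1 : ℝ) / p ≤ ∑ p ∈ Nat.primesBelow (2 ^ M), (1 : ℝ) / p :=
      sum_le_sum_of_subset_of_nonneg (erase_subset _ _) fun p _ _ => by positivity
    have h'' : ∑ p ∈ oddPrimes (2 ^ M), (2 : ℝ) / p = 2 * ∑ p ∈ oddPrimes (2 ^ M), (1 : ℝ) / p := by
      rw [mul_sum]
      exact sum_congr rfl fun p _ => by ring
    linarith
  have h3 : (2 * (#(oddPrimes (2 ^ M)) : ℝ) + 1) ^ r ≤ 2 ^ ((M + 1) * r) := by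
    rw [pow_mul]
    refine pow_le_pow_left₀ (by positivity) ?_ r
    -- `0` is not an odd prime, so there are fewer than `2 ^ M` odd primes below `2 ^ M`
    have hlt : #(oddPrimes (2 ^ M)) < 2 ^ M := by
      have hss : oddPrimes (2 ^ M) ⊂ range (2 ^ M) := by
        refine (ssubset_iff_of_subset fun p hp => ?_).mpr ⟨0, by simp, fun h => ?_⟩
        · exact mem_range.mpr (Nat.lt_of_mem_primesBelow (mem_of_mem_erase hp))
        · exact Nat.not_prime_zero (prime_of_mem h)
      simpa using card_lt_card hss
    have : 2 * #(oddPrimes (2 ^ M)) + 1 ≤ 2 ^ (M + 1) := by rw [pow_succ]; omega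
    exact_mod_cast this
  rw [Nat.cast_pow, Nat.cast_two] at hs
  calc _ ≤ _ := hcard
    _ ≤ 2 ^ M + _ := add_le_add_right hs _
    _ ≤ 2 ^ M + (2 ^ k * (4 / (M * Real.log 2) ^ 2 +
      Real.exp (Real.exp 1 * (8 + 8 * Real.log M) - r)) + 2 ^ ((M + 1) * r)) := by gcongr
    _ = _ := by ring

open Filter in
/-- The sieve parameters are `M = ⌊k ^ (3 / 4)⌋` and `r = 2 * ⌈12 log k⌉`. The main term is then of
relative size `k ^ (-3 / 2)`; since `8 e < 22 = 24 - 2`, the tail is `O(k ^ (-2))`; and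
`(M + 1) * r` is of order `k ^ (3 / 4) * log k = o(k)`, so the remainder is at most `2 ^ (k / 2)`. -/
theorem eventually_twinCount_le : ∀ᶠ k : ℕ in atTop, (twinCount (2 ^ k) : ℝ) / 2 ^ k ≤
    2 * ((2 : ℝ) ^ (-(1 / 2) : ℝ)) ^ k + 64 * (k : ℝ) ^ (-(3 / 2) : ℝ) +
      Real.exp 22 * (k : ℝ) ^ (-2 : ℝ) := by
  have hcast := tendsto_natCast_atTop_atTop (R := ℝ)
  have hlog : ∀ᶠ k : ℕ in atTop, Real.log k ≤ (k : ℝ) ^ (1 / 8 : ℝ) := by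
    have := (isLittleO_log_rpow_atTop (r := 1 / 8) (by norm_num)).bound one_pos
    filter_upwards [hcast.eventually this] with k hk
    rw [one_mul, Real.norm_of_nonneg (Real.rpow_nonneg (Nat.cast_nonneg _) _)] at hk
    exact (le_abs_self _).trans hk
  have hbig : ∀ᶠ k : ℕ in atTop, (104 : ℝ) ≤ (k : ℝ) ^ (1 / 8 : ℝ) :=
    ((tendsto_rpow_atTop (by norm_num : (0 : ℝ) < 1 / 8)).comp hcast).eventually_ge_atTop 104
  filter_upwards [hlog, hbig, eventually_ge_atTop 1] with k hlog hbig hk1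
  have hk : (1 : ℝ) ≤ k := by exact_mod_cast hk1
  have hk0 : (0 : ℝ) < k := by linarith
  have hlog0 : 0 ≤ Real.log k := Real.log_nonneg hk
  set u : ℝ := (k : ℝ) ^ (1 / 8 : ℝ) with hu
  -- all powers of `k` involved are powers of `u = k ^ (1 / 8)`, and `log k ≤ u`
  have hpow : ∀ n : ℕ, (k : ℝ) ^ (n / 8 : ℝ) = u ^ n := by
    intro n
    rw [hu, ← Real.rpow_natCast, ← Real.rpow_mul hk0.le]
    congr 1; ring
  have hu8 : (k : ℝ) = u ^ 8 := by rw [← hpow 8]; norm_num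
  set M : ℕ := ⌊u ^ 6⌋₊ with hMdef
  set r : ℕ := 2 * ⌈12 * Real.log k⌉₊ with hrdef
  have hu6 : (104 : ℝ) ≤ u ^ 6 := by
    calc (104 : ℝ) ≤ u := hbig
      _ ≤ u ^ 6 := le_self_pow₀ (by linarith) (by norm_num)
  have hMle : (M : ℝ) ≤ u ^ 6 := Nat.floor_le (by positivity)
  have hMge : u ^ 6 / 2 ≤ M := by
    have := Nat.lt_floor_add_one (u ^ 6)
    rw [← hMdef] at this
    linarith
  have hM2 : 2 ≤ M := by
    have : (2 : ℝ) ≤ M := by linarith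
    exact_mod_cast this
  have hMk : (M : ℝ) ≤ k := by
    rw [hu8]
    exact hMle.trans (pow_le_pow_right₀ (by linarith) (by norm_num))
  have hM0 : (0 : ℝ) < M := by linarith
  have hrge : 24 * Real.log k ≤ r := by
    have := Nat.le_ceil (12 * Real.log k)
    rw [hrdef]; push_cast; linarith
  have hrle : (r : ℝ) ≤ 24 * u + 2 := by
    have := Nat.ceil_lt_add_one (a := 12 * Real.log k) (by positivity)
    rw [hrdef]; push_cast; linarith
  have hexp : ((M + 1) * r : ℝ) ≤ k / 2 := by
    have h1 : ((M : ℝ) + 1) ≤ 2 * u ^ 6 := by linarith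
    have h2 : (r : ℝ) ≤ 26 * u := by linarith
    calc ((M + 1) * r : ℝ) ≤ (2 * u ^ 6) * (26 * u) := by gcongr
      _ = 104 * u ^ 7 / 2 := by ring
      _ ≤ u * u ^ 7 / 2 := by gcongr
      _ = k / 2 := by rw [hu8]; ring
  have hMexp : (M : ℝ) ≤ k / 2 := by
    calc (M : ℝ) ≤ u ^ 6 := hMle
      _ = u ^ 6 * 2 / 2 := by ring
      _ ≤ u ^ 6 * u ^ 2 / 2 := by gcongr; nlinarith
      _ = k / 2 := by rw [hu8]; ring
  have htwo : ∀ n : ℕ, (n : ℝ) ≤ k / 2 → (2 : ℝ) ^ n / 2 ^ k ≤ ((2 : ℝ) ^ (-(1 / 2) : ℝ)) ^ k := by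
    intro n hn
    rw [← Real.rpow_natCast, ← Real.rpow_natCast, ← Real.rpow_natCast, ← Real.rpow_sub two_pos,
      ← Real.rpow_mul two_pos.le]
    exact Real.rpow_le_rpow_of_exponent_le one_le_two (by linarith)
  have hmain : 4 / (M * Real.log 2) ^ 2 ≤ 64 * (k : ℝ) ^ (-(3 / 2) : ℝ) := by
    have h12 : (k : ℝ) ^ (-(3 / 2) : ℝ) = 1 / (u ^ 6) ^ 2 := by
      rw [Real.rpow_neg hk0.le, ← pow_mul, ← hpow (6 * 2), one_div]; norm_num
    have hl : (1 : ℝ) / 2 ≤ Real.log 2 := by linarith [Real.log_two_gt_d9]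
    calc 4 / (M * Real.log 2) ^ 2 ≤ 4 / (u ^ 6 / 2 * (1 / 2)) ^ 2 := by gcongr
      _ = _ := by rw [h12]; field_simp; norm_num
  have htail : Real.exp (Real.exp 1 * (8 + 8 * Real.log M) - r) ≤
      Real.exp 22 * (k : ℝ) ^ (-2 : ℝ) := by
    rw [Real.rpow_def_of_pos hk0, ← Real.exp_add, Real.exp_le_exp]
    have he : Real.exp 1 ≤ 2.75 := by linarith [Real.exp_one_lt_d9]
    have hlM : Real.log M ≤ Real.log k := Real.log_le_log hM0 hMk
    have : Real.exp 1 * (8 + 8 * Real.log M) ≤ 2.75 * (8 + 8 * Real.log k) := by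
      gcongr
    linarith
  have hfin := twinCount_two_pow_le k M r hM2 (even_two_mul _)
  have h2k : (0 : ℝ) < 2 ^ k := by positivity
  calc (twinCount (2 ^ k) : ℝ) / 2 ^ k ≤ (2 ^ M + 2 ^ k * (4 / (M * Real.log 2) ^ 2 +
      Real.exp (Real.exp 1 * (8 + 8 * Real.log M) - r)) + 2 ^ ((M + 1) * r)) / 2 ^ k := by gcongr
    _ = 2 ^ M / 2 ^ k + 2 ^ ((M + 1) * r) / 2 ^ k + 4 / (M * Real.log 2) ^ 2 +
      Real.exp (Real.exp 1 * (8 + 8 * Real.log M) - r) := by field_simp; ring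
    _ ≤ _ := by
      have a := htwo M hMexp
      have b := htwo ((M + 1) * r) (by push_cast; exact hexp)
      linarith

/-! ### Summation over dyadic blocks -/

theorem summable_twinCount : Summable fun k : ℕ => (twinCount (2 ^ k) : ℝ) / 2 ^ k := by
  have hg : Summable fun k : ℕ => 2 * ((2 : ℝ) ^ (-(1 / 2) : ℝ)) ^ k +
      64 * (k : ℝ) ^ (-(3 / 2) : ℝ) + Real.exp 22 * (k : ℝ) ^ (-2 : ℝ) := by
    refine ((Summable.mul_left _ (summable_geometric_of_lt_one (by positivity) ?_)).add
      (Summable.mul_left _ (Real.summable_nat_rpow.mpr (by norm_num)))).add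
      (Summable.mul_left _ (Real.summable_nat_rpow.mpr (by norm_num)))
    exact Real.rpow_lt_one_of_one_lt_of_neg one_lt_two (by norm_num)
  refine hg.of_norm_bounded_eventually_nat ?_
  filter_upwards [eventually_twinCount_le] with k hk
  rwa [Real.norm_of_nonneg (by positivity)]

theorem summable_twin_indicator :
    Summable ({p : ℕ | p.Prime ∧ (p + 2).Prime}.indicator fun p => (1 : ℝ) / p) := by
  set f := {p : ℕ | p.Prime ∧ (p + 2).Prime}.indicator fun p => (1 : ℝ) / p with hf
  have hf0 : ∀ n, 0 ≤ f n := fun n => Set.indicator_nonneg (fun p _ => by positivity) n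
  have hblock : ∀ k, ∑ n ∈ Ico (2 ^ k) (2 ^ (k + 1)), f n ≤
      2 * ((twinCount (2 ^ (k + 1)) : ℝ) / 2 ^ (k + 1)) := by
    intro k
    calc ∑ n ∈ Ico (2 ^ k) (2 ^ (k + 1)), f n
        ≤ ∑ n ∈ Ico (2 ^ k) (2 ^ (k + 1)),
          (if n.Prime ∧ (n + 2).Prime then (1 : ℝ) / 2 ^ k else 0) := by
          refine sum_le_sum fun n hn => ?_
          simp only [hf, Set.indicator_apply, Set.mem_ofPred_eq]
          split_ifs
          · gcongr
            exact_mod_cast (mem_Ico.mp hn).1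
          · rfl
      _ ≤ ∑ n ∈ range (2 ^ (k + 1)),
          (if n.Prime ∧ (n + 2).Prime then (1 : ℝ) / 2 ^ k else 0) := by
          refine sum_le_sum_of_subset_of_nonneg (fun n hn => ?_) fun n _ _ => ?_
          · exact mem_range.mpr (mem_Ico.mp hn).2
          · split_ifs <;> positivity
      _ = _ := by
          rw [← sum_filter, sum_const, nsmul_eq_mul, twinCount, pow_succ (2 : ℝ)]
          field_simp
  have hs : Summable fun k : ℕ => 2 * ((twinCount (2 ^ (k + 1)) : ℝ) / 2 ^ (k + 1)) :=
    ((summable_nat_add_iff 1).mpr summable_twinCount).mul_left 2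
  refine summable_of_sum_range_le hf0 (c := ∑' k : ℕ, 2 * ((twinCount (2 ^ (k + 1)) : ℝ) / 2 ^ (k + 1)))
    fun n => ?_
  calc ∑ i ∈ range n, f i ≤ ∑ i ∈ range (2 ^ n), f i :=
        sum_le_sum_of_subset_of_nonneg (range_subset_range.mpr Nat.lt_two_pow_self.le)
          fun i _ _ => hf0 i
    _ = ∑ k ∈ range n, ∑ i ∈ Ico (2 ^ k) (2 ^ (k + 1)), f i := by
        rw [sum_range_two_pow, add_eq_right, hf]
        simp
    _ ≤ ∑ k ∈ range n, 2 * ((twinCount (2 ^ (k + 1)) : ℝ) / 2 ^ (k + 1)) :=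
        sum_le_sum fun k _ => hblock k
    _ ≤ _ := hs.sum_le_tsum _ fun k _ => by positivity

end Brun

/-- Brun's theorem: the sum over all primes `p` with `p + 2` also prime of
`1/p + 1/(p+2)` converges (Brun's constant `B₂` is finite). -/
theorem brun_theorem :
    Summable (fun p : {p : ℕ // p.Prime ∧ (p + 2).Prime} =>
      1 / (p : ℝ) + 1 / ((p : ℝ) + 2)) := by
  have h : Summable fun p : {p : ℕ // p.Prime ∧ (p + 2).Prime} => (1 : ℝ) / (p : ℕ) :=
    summable_subtype_iff_indicator.mpr Brun.summable_twin_indicator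
  refine (h.mul_left 2).of_nonneg_of_le (fun p => by positivity) fun p => ?_
  have hp : (0 : ℝ) < (p : ℕ) := by exact_mod_cast p.2.1.pos
  have : 1 / (((p : ℕ) : ℝ) + 2) ≤ 1 / ((p : ℕ) : ℝ) := by gcongr; linarith
  linarith
end
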